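/- arXiv:1909.04484 — 2 statements merged into one kernel-verified Lean document; each statement's English description precedes it below -/
import Mathlib

section
/- Let ε > 0 and take F(x) = x, so that for a probability measure μ on [0,1] with E_μ > 0 the dynamics is T_μ^ε(x) = (2 + ε(1/E_μ − 2))·x mod 1. Then the self-consistent system has at least two absolutely continuous invariant measures: Lebesgue measure λ is invariant, i.e. (T_λ^ε)_*λ = λ, and there exists a probability measure μ on [0,1] with μ ≪ λ, λ ≪ μ and μ ≠ λ such that (T_μ^ε)_*μ = μ. -/
open MeasureTheory

/-- Lebesgue measure on the interval `[0,1]`. -/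
noncomputable def lebI : Measure ℝ := volume.restrict (Set.Icc 0 1)

/-- `E_μ = ∫₀¹ x dμ(x)`. -/
noncomputable def Emu (μ : Measure ℝ) : ℝ := ∫ x in Set.Icc (0:ℝ) 1, x ∂μ

/-- The self-consistent dynamics `T_μ^ε(x) = (2 + ε F(1/E_μ − 2)) x mod 1`. -/
noncomputable def Tsc (ε : ℝ) (F : ℝ → ℝ) (μ : Measure ℝ) (x : ℝ) : ℝ :=
  Int.fract ((2 + ε * F (1 / Emu μ - 2)) * x)

open Filter Topology ENNReal

noncomputable abbrev li (s : ℝ) : Measure ℝ := volume.restrict (Set.Ico 0 s)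

lemma lebI_eq : lebI = li 1 := by
  unfold lebI
  exact Measure.restrict_congr_set Ico_ae_eq_Icc.symm

lemma map_fract_piece (m : ℕ) (s : ℝ) (h0 : 0 ≤ s) (h1 : s ≤ 1) :
    Measure.map Int.fract (volume.restrict (Set.Ico (m:ℝ) (m + s))) = li s := by
  have e1 : Measure.map Int.fract (volume.restrict (Set.Ico (m:ℝ) (m + s)))
      = Measure.map (fun x => x - (m:ℝ)) (volume.restrict (Set.Ico (m:ℝ) (m + s))) := by
    apply Measure.map_congr
    filter_upwards [ae_restrict_mem measurableSet_Ico] with x hx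
    have hf : ⌊x⌋ = (m:ℤ) := by
      rw [Int.floor_eq_iff]
      constructor
      · exact_mod_cast hx.1
      · have := hx.2; push_cast; linarith
    rw [Int.fract, hf]
    simp
  rw [e1]
  have mp : MeasurePreserving (fun x : ℝ => x - (m:ℝ)) volume volume :=
    measurePreserving_sub_right volume (m:ℝ)
  have := (mp.restrict_preimage (s := Set.Ico 0 s) measurableSet_Ico).map_eq
  have e2 : (fun x : ℝ => x - (m:ℝ)) ⁻¹' Set.Ico 0 s = Set.Ico (m:ℝ) (m + s) := by
    ext x; simp [add_comm]
  rw [e2] at this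
  exact this

lemma map_fract_nat (k : ℕ) :
    Measure.map Int.fract (volume.restrict (Set.Ico (0:ℝ) k)) = (k : ℝ≥0∞) • li 1 := by
  induction k with
  | zero => simp
  | succ k ih =>
    have : Set.Ico (0:ℝ) ((k+1 : ℕ):ℝ) = Set.Ico 0 (k:ℝ) ∪ Set.Ico (k:ℝ) (k+1) := by
      rw [Set.Ico_union_Ico_eq_Ico] <;> first | positivity | simp
    rw [this, Measure.restrict_union _ measurableSet_Ico, Measure.map_add _ _ measurable_fract, ih,
      map_fract_piece k 1 zero_le_one le_rfl]
    · push_cast; rw [add_smul, one_smul]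
    · rw [Set.disjoint_left]; intro x hx hy; exact absurd hx.2 (not_lt.2 hy.1)

lemma map_fract_full (k : ℕ) (s : ℝ) (h0 : 0 ≤ s) (h1 : s ≤ 1) :
    Measure.map Int.fract (volume.restrict (Set.Ico (0:ℝ) (k + s)))
      = (k : ℝ≥0∞) • li 1 + li s := by
  have : Set.Ico (0:ℝ) (k + s) = Set.Ico 0 (k:ℝ) ∪ Set.Ico (k:ℝ) (k+s) := by
    rw [Set.Ico_union_Ico_eq_Ico] <;> first | positivity | linarith
  rw [this, Measure.restrict_union _ measurableSet_Ico, Measure.map_add _ _ measurable_fract,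
    map_fract_nat, map_fract_piece k s h0 h1]
  rw [Set.disjoint_left]; intro x hx hy; exact absurd hx.2 (not_lt.2 hy.1)

lemma map_beta (β s s' : ℝ) (k : ℕ) (hβ : 0 < β) (h0 : 0 ≤ s') (h1 : s' ≤ 1)
    (h : β * s - s' = k) :
    Measure.map (fun x => Int.fract (β * x)) (li s)
      = ENNReal.ofReal β⁻¹ • ((k : ℝ≥0∞) • li 1 + li s') := by
  have hm : Measurable (fun x : ℝ => β * x) := measurable_const_mul β
  have e : Measure.map (fun x => β * x) (li s)
      = ENNReal.ofReal β⁻¹ • volume.restrict (Set.Ico (0:ℝ) (k + s')) := by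
    have h2 := Real.map_volume_mul_left hβ.ne'
    rw [abs_of_pos (inv_pos.2 hβ)] at h2
    rw [← Measure.restrict_smul, ← h2, Measure.restrict_map hm measurableSet_Ico]
    suffices hh : Set.Ico 0 s = (fun x => β * x) ⁻¹' Set.Ico (0:ℝ) (k + s') by
      rw [li, hh]
    ext x
    simp only [Set.mem_Ico, Set.mem_preimage]
    rw [← h]
    constructor
    · rintro ⟨a, b⟩; exact ⟨by positivity, by nlinarith⟩
    · rintro ⟨a, b⟩
      exact ⟨nonneg_of_mul_nonneg_right a hβ, lt_of_mul_lt_mul_left (by linarith) hβ.le⟩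
  rw [← map_fract_full k s' h0 h1, ← Measure.map_smul, ← e,
    Measure.map_map measurable_fract hm]
  rfl

/-- admissible pairs -/
def Adm (β : ℝ) (s : ℕ → ℝ) : Prop :=
  s 0 = 1 ∧ (∀ n, 0 ≤ s n ∧ s n ≤ 1) ∧ ∀ n, β * s n - s (n+1) ∈ Set.range (Nat.cast : ℕ → ℝ)

noncomputable def nu (β : ℝ) (s : ℕ → ℝ) : Measure ℝ :=
  Measure.sum fun n => ENNReal.ofReal (β⁻¹ ^ n) • li (s n)

lemma ksum (β : ℝ) (hβ : 2 ≤ β) (s : ℕ → ℝ) (h : Adm β s) (k : ℕ → ℕ)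
    (hk : ∀ n, β * s n - s (n+1) = k n) :
    ∑' n, ENNReal.ofReal (β⁻¹ ^ (n+1)) * (k n : ℝ≥0∞) = 1 := by
  have hβ0 : 0 < β := by linarith
  have e : ∀ n, ENNReal.ofReal (β⁻¹ ^ (n+1)) * (k n : ℝ≥0∞)
      = ENNReal.ofReal (β⁻¹ ^ (n+1) * k n) := by
    intro n
    rw [ENNReal.ofReal_mul (by positivity), ENNReal.ofReal_natCast]
  have hs : HasSum (fun n => β⁻¹ ^ (n+1) * (k n : ℝ)) 1 := by
    rw [hasSum_iff_tendsto_nat_of_nonneg (fun n => by positivity)]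
    have e2 : ∀ n, β⁻¹ ^ (n+1) * (k n : ℝ) = β⁻¹ ^ n * s n - β⁻¹ ^ (n+1) * s (n+1) := by
      intro n
      rw [← hk, pow_succ]; field_simp
    simp_rw [e2, Finset.sum_range_sub' (fun n => β⁻¹ ^ n * s n)]
    simp only [pow_zero, h.1, mul_one]
    have : Tendsto (fun n => β⁻¹ ^ n * s n) atTop (𝓝 0) := by
      apply squeeze_zero (g := fun n => β⁻¹ ^ n)
      · intro n; have := (h.2.1 n).1; positivity
      · intro n; exact mul_le_of_le_one_right (by positivity) (h.2.1 n).2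
      · exact tendsto_pow_atTop_nhds_zero_of_lt_one (by positivity)
          (inv_lt_one_of_one_lt₀ (by linarith))
    simpa using this.const_sub 1
  simp_rw [e]
  rw [← ENNReal.ofReal_tsum_of_nonneg (fun n => by positivity) hs.summable, hs.tsum_eq]
  simp

lemma nu_inv (β : ℝ) (hβ : 2 ≤ β) (s : ℕ → ℝ) (h : Adm β s) :
    Measure.map (fun x => Int.fract (β * x)) (nu β s) = nu β s := by
  have hβ0 : 0 < β := by linarith
  choose k hk using h.2.2
  have hm : Measurable (fun x : ℝ => Int.fract (β * x)) :=
    measurable_fract.comp (measurable_const_mul β)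
  have hp : ∀ n, Measure.map (fun x => Int.fract (β * x)) (li (s n))
      = ENNReal.ofReal β⁻¹ • ((k n : ℝ≥0∞) • li 1 + li (s (n+1))) := fun n =>
    map_beta β _ _ (k n) hβ0 (h.2.1 _).1 (h.2.1 _).2 (hk n).symm
  ext A hA
  rw [Measure.map_apply hm hA]
  unfold nu
  rw [Measure.sum_apply _ (hm hA), Measure.sum_apply _ hA]
  have e : ∀ n, (ENNReal.ofReal (β⁻¹ ^ n) • li (s n)) ((fun x => Int.fract (β * x)) ⁻¹' A)
      = (ENNReal.ofReal (β⁻¹ ^ (n+1)) * (k n : ℝ≥0∞)) * li 1 A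
        + ENNReal.ofReal (β⁻¹ ^ (n+1)) * li (s (n+1)) A := by
    intro n
    rw [Measure.smul_apply, ← Measure.map_apply hm hA, hp]
    simp only [Measure.smul_apply, Measure.add_apply, smul_eq_mul]
    rw [pow_succ, ENNReal.ofReal_mul (by positivity)]
    ring
  simp_rw [e]
  rw [ENNReal.tsum_add, ENNReal.tsum_mul_right, ksum β hβ s h k (fun n => (hk n).symm)]
  rw [tsum_eq_zero_add' (f := fun n => (ENNReal.ofReal (β⁻¹ ^ n) • li (s n)) A) ENNReal.summable]
  simp [h.1]

lemma nu_finite (β : ℝ) (hβ : 2 ≤ β) (s : ℕ → ℝ) (h : Adm β s) : IsFiniteMeasure (nu β s) := by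
  have hβ0 : 0 < β := by linarith
  constructor
  unfold nu
  rw [Measure.sum_apply _ MeasurableSet.univ]
  have hs : Summable (fun n => β⁻¹ ^ n) :=
    summable_geometric_of_lt_one (by positivity) (inv_lt_one_of_one_lt₀ (by linarith))
  calc _ ≤ ∑' n, ENNReal.ofReal (β⁻¹ ^ n) := by
        apply ENNReal.tsum_le_tsum
        intro n
        simp only [Measure.smul_apply, smul_eq_mul, li, Measure.restrict_apply_univ, Real.volume_Ico]
        apply mul_le_of_le_one_right (by positivity)
        rw [ENNReal.ofReal_le_one]; linarith [(h.2.1 n).2]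
    _ < ⊤ := by
        rw [← ENNReal.ofReal_tsum_of_nonneg (fun n => by positivity) hs]
        simp

lemma nu_ac (β : ℝ) (s : ℕ → ℝ) (h : Adm β s) : nu β s ≪ li 1 := by
  apply Measure.absolutelyContinuous_sum_left
  intro n
  refine Measure.AbsolutelyContinuous.trans Measure.smul_absolutelyContinuous ?_
  apply Measure.absolutelyContinuous_of_le
  exact Measure.restrict_mono (Set.Ico_subset_Ico_right (h.2.1 n).2) le_rfl

lemma ac_nu (β : ℝ) (s : ℕ → ℝ) (h : Adm β s) : li 1 ≤ nu β s := by
  have := Measure.le_sum (fun n => ENNReal.ofReal (β⁻¹ ^ n) • li (s n)) 0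
  simpa [h.1, nu] using this

noncomputable def phi (e β : ℝ) (s : ℕ → ℝ) : ℝ := ∑' n, β⁻¹ ^ n * (s n ^ 2 / 2 - e * s n)

lemma integrable_li (e : ℝ) (μ : Measure ℝ) [IsFiniteMeasure μ] (hμ : μ ≪ li 1) :
    Integrable (fun x => x - e) μ := by
  apply Integrable.of_bound (C := 1 + |e|) (by fun_prop)
  have : ∀ᵐ x ∂(li 1), ‖x - e‖ ≤ 1 + |e| := by
    filter_upwards [ae_restrict_mem measurableSet_Ico] with x hx
    calc ‖x - e‖ ≤ ‖x‖ + ‖e‖ := norm_sub_le _ _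
      _ ≤ 1 + |e| := by
        simp only [Real.norm_eq_abs]
        rw [abs_of_nonneg hx.1]; linarith [hx.2]
  exact hμ.ae_le this

lemma integral_nu (e β : ℝ) (hβ : 2 ≤ β) (s : ℕ → ℝ) (h : Adm β s) :
    ∫ x, (x - e) ∂(nu β s) = phi e β s := by
  have hβ0 : 0 < β := by linarith
  have := nu_finite β hβ s h
  have hi := integrable_li e _ (nu_ac β s h)
  unfold nu at hi ⊢
  rw [integral_sum_measure hi]
  unfold phi
  congr 1; ext n
  rw [integral_smul_measure, ENNReal.toReal_ofReal (by positivity), smul_eq_mul]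
  congr 1
  rw [li, integral_Ico_eq_integral_Ioc, ← intervalIntegral.integral_of_le (h.2.1 n).1]
  rw [intervalIntegral.integral_sub (by simp) (by simp)]
  simp [integral_id]; ring

noncomputable def orb (β : ℝ) : ℕ → ℝ
  | 0 => 1
  | n+1 => Int.fract (β * orb β n)

lemma orb_adm (β : ℝ) (hβ : 0 ≤ β) : Adm β (orb β) := by
  have h : ∀ n, 0 ≤ orb β n ∧ orb β n ≤ 1 := by
    intro n
    cases n with
    | zero => simp [orb]
    | succ n => exact ⟨Int.fract_nonneg _, (Int.fract_lt_one _).le⟩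
  refine ⟨rfl, h, fun n => ⟨⌊β * orb β n⌋₊, ?_⟩⟩
  have h0 : 0 ≤ β * orb β n := mul_nonneg hβ (h n).1
  rw [natCast_floor_eq_intCast_floor h0, orb, Int.fract]
  ring

noncomputable def ee (ε β : ℝ) : ℝ := ε / (2 * ε + β - 2)

lemma ee_bd (ε β : ℝ) (hε : 0 < ε) (hβ : 2 ≤ β) : 0 < ee ε β ∧ ee ε β ≤ 1 / 2 := by
  unfold ee
  constructor
  · apply div_pos hε; linarith
  · rw [div_le_div_iff₀] <;> linarith

lemma term_bd (ε β x : ℝ) (n : ℕ) (hε : 0 < ε) (hβ : 2 ≤ β) (h0 : 0 ≤ x) (h1 : x ≤ 1) :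
    ‖β⁻¹ ^ n * (x ^ 2 / 2 - ee ε β * x)‖ ≤ (2⁻¹ : ℝ) ^ n := by
  obtain ⟨a, b⟩ := ee_bd ε β hε hβ
  have hβ0 : 0 < β := by linarith
  rw [norm_mul, Real.norm_of_nonneg (by positivity : 0 ≤ β⁻¹ ^ n)]
  have h2 : ‖x ^ 2 / 2 - ee ε β * x‖ ≤ 1 := by
    rw [Real.norm_eq_abs, abs_le]
    constructor <;> nlinarith
  have h3 : β⁻¹ ^ n ≤ (2⁻¹ : ℝ) ^ n := by gcongr
  calc _ ≤ (2⁻¹ : ℝ) ^ n * 1 := by gcongr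
    _ = _ := mul_one _

def KK (a : ℝ) : Set (ℝ × (ℕ → ℝ)) := {p | p.1 ∈ Set.Icc a 3 ∧ Adm p.1 p.2}

lemma KK_compact (a : ℝ) : IsCompact (KK a) := by
  have hc : IsCompact ((Set.Icc a 3) ×ˢ (Set.pi Set.univ fun _ : ℕ => Set.Icc (0:ℝ) 1)) :=
    isCompact_Icc.prod (isCompact_univ_pi fun _ => isCompact_Icc)
  refine hc.of_isClosed_subset ?_ ?_
  · have : KK a = {p | p.1 ∈ Set.Icc a 3} ∩ ({p | p.2 0 = 1} ∩ ((⋂ n, {p | 0 ≤ p.2 n ∧ p.2 n ≤ 1}) ∩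
        ⋂ n, {p | p.1 * p.2 n - p.2 (n+1) ∈ Set.range (Nat.cast : ℕ → ℝ)})) := by
      ext p; simp [KK, Adm]
    rw [this]
    refine IsClosed.inter (isClosed_Icc.preimage continuous_fst) (IsClosed.inter ?_ (IsClosed.inter ?_ ?_))
    · exact isClosed_eq (by fun_prop) (by fun_prop)
    · refine isClosed_iInter fun n => IsClosed.and ?_ ?_
      · exact isClosed_le (by fun_prop) (by fun_prop)
      · exact isClosed_le (by fun_prop) (by fun_prop)
    · refine isClosed_iInter fun n => ?_
      exact Nat.isClosedEmbedding_coe_real.isClosed_range.preimage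
        (f := fun p : ℝ × (ℕ → ℝ) => p.1 * p.2 n - p.2 (n+1)) (by fun_prop)
  · rintro p ⟨h1, h2⟩
    exact ⟨h1, fun n _ => h2.2.1 n⟩

lemma phi_cont (ε a : ℝ) (hε : 0 < ε) (ha : 2 ≤ a) :
    ContinuousOn (fun p : ℝ × (ℕ → ℝ) => phi (ee ε p.1) p.1 p.2) (KK a) := by
  unfold phi
  apply continuousOn_tsum (u := fun n => (2⁻¹ : ℝ) ^ n)
  · intro n
    unfold ee
    have h1 : ∀ p ∈ KK a, p.1 ≠ 0 := fun p hp => by have := hp.1.1; linarith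
    have h2 : ∀ p ∈ KK a, 2 * ε + p.1 - 2 ≠ 0 := fun p hp => by have := hp.1.1; linarith
    fun_prop (disch := assumption)
  · exact summable_geometric_of_lt_one (by positivity) (by norm_num)
  · rintro n p ⟨h1, h2⟩
    exact term_bd ε _ _ n hε (ha.trans h1.1) (h2.2.1 n).1 (h2.2.1 n).2

/-- the intermediate value argument -/
lemma exists_beta (ε a : ℝ) (hε : 0 < ε) (ha : 2 ≤ a) (ha3 : a ≤ 3)
    (hstart : phi (ee ε a) a (orb a) ≤ 0) :
    ∃ β ∈ Set.Icc a 3, ∃ s s', Adm β s ∧ Adm β s' ∧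
      phi (ee ε β) β s ≤ 0 ∧ 0 ≤ phi (ee ε β) β s' := by
  set Φ := fun p : ℝ × (ℕ → ℝ) => phi (ee ε p.1) p.1 p.2 with hΦ
  have hcont : ContinuousOn Φ (KK a) := phi_cont ε a hε ha
  have key : ∀ t : Set ℝ, IsClosed t → IsClosed (Prod.fst '' (KK a ∩ Φ ⁻¹' t)) := by
    intro t ht
    have h1 := hcont.preimage_isClosed_of_isClosed (KK_compact a).isClosed ht
    exact (((KK_compact a).of_isClosed_subset h1 Set.inter_subset_left).image continuous_fst).isClosed
  have hcon := isPreconnected_closed_iff.1 (isPreconnected_Icc (a := a) (b := (3:ℝ))) _ _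
    (key (Set.Iic 0) isClosed_Iic) (key (Set.Ici 0) isClosed_Ici) (?_) ⟨a, ⟨le_rfl, ha3⟩, ?_⟩ ⟨3, ⟨ha3, le_rfl⟩, ?_⟩
  · obtain ⟨β, hβ, ⟨⟨_, s⟩, ⟨h1, h2⟩, rfl⟩, ⟨⟨_, s'⟩, ⟨h3, h4⟩, rfl⟩⟩ := hcon
    exact ⟨_, hβ, s, s', h1.2, h3.2, h2, h4⟩
  · intro β hβ
    have hA : (β, orb β) ∈ KK a := ⟨hβ, orb_adm β (by have := hβ.1; linarith)⟩
    rcases le_total (Φ (β, orb β)) 0 with h | h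
    · exact Or.inl ⟨_, ⟨hA, h⟩, rfl⟩
    · exact Or.inr ⟨_, ⟨hA, h⟩, rfl⟩
  · exact ⟨(a, orb a), ⟨⟨⟨le_rfl, ha3⟩, orb_adm a (by linarith)⟩, hstart⟩, rfl⟩
  · refine ⟨(3, fun _ => 1), ⟨⟨⟨ha3, le_rfl⟩, rfl, fun n => by norm_num, fun n => ⟨2, by norm_num⟩⟩, ?_⟩, rfl⟩
    have := (ee_bd ε 3 hε (by norm_num)).2
    simp only [hΦ, Set.mem_preimage, Set.mem_Ici, phi]
    apply tsum_nonneg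
    intro n
    apply mul_nonneg (by positivity); linarith

lemma orb_start (δ : ℝ) (N : ℕ) (h0 : 0 < δ) (h1 : 3 ^ N * δ ≤ 1 / 2) (n : ℕ) (hn : n ≤ N) :
    orb (2 + δ) (n+1) = (2 + δ) ^ n * δ ∧ (2 + δ) ^ n * δ ≤ 1 / 2 := by
  have hN : (1:ℝ) ≤ 3 ^ N := one_le_pow₀ (by norm_num)
  have hδ : δ ≤ 1 / 2 := by nlinarith
  have hb : ∀ n ≤ N, (2 + δ) ^ n * δ ≤ 1 / 2 := by
    intro n hn
    refine le_trans ?_ h1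
    gcongr
    calc (2 + δ) ^ n ≤ 3 ^ n := by gcongr; linarith
      _ ≤ 3 ^ N := pow_le_pow_right₀ (by norm_num) hn
  refine ⟨?_, hb n hn⟩
  induction n with
  | zero =>
    simp only [orb, mul_one, pow_zero, one_mul]
    rw [Int.fract_eq_iff]
    exact ⟨h0.le, by linarith, 2, by push_cast; ring⟩
  | succ n ih =>
    rw [orb, ih (by omega), pow_succ, Int.fract_eq_iff]
    have := hb (n+1) hn
    rw [pow_succ] at this
    exact ⟨by positivity, by linarith, 0, by push_cast; ring⟩

lemma start (ε : ℝ) (hε : 0 < ε) : ∃ a, 2 < a ∧ a ≤ 3 ∧ phi (ee ε a) a (orb a) ≤ 0 := by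
  obtain ⟨N, hN⟩ := exists_nat_ge (12 / ε)
  obtain ⟨δ, h0, hδ1, hδ2⟩ : ∃ δ : ℝ, 0 < δ ∧ 3 ^ N * δ ≤ 1 / 2 ∧ δ ≤ ε / 2 := by
    refine ⟨min (1 / 2 / 3 ^ N) (ε / 2), by positivity, ?_, min_le_right _ _⟩
    calc (3:ℝ) ^ N * min (1 / 2 / 3 ^ N) (ε / 2) ≤ 3 ^ N * (1 / 2 / 3 ^ N) := by
          gcongr; exact min_le_left _ _
      _ = 1 / 2 := by field_simp
  have hN1 : (1:ℝ) ≤ 3 ^ N := one_le_pow₀ (by norm_num)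
  have hδ : δ ≤ 1 / 2 := by nlinarith
  set β := 2 + δ with hβ
  have hβ0 : 0 < β := by linarith
  have hadm := orb_adm β hβ0.le
  refine ⟨β, by linarith, by linarith, ?_⟩
  have he : 1 / 2 - δ / (4 * ε) ≤ ee ε β := by
    unfold ee
    rw [hβ, le_div_iff₀ (by linarith)]
    have : (1 / 2 - δ / (4 * ε)) * (2 * ε + (2 + δ) - 2) = ε - δ ^ 2 / (4 * ε) := by
      field_simp; ring
    rw [this]
    have : 0 ≤ δ ^ 2 / (4 * ε) := by positivity
    linarith
  have hd : δ / (4 * ε) ≤ 1 / 8 := by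
    rw [div_le_div_iff₀] <;> nlinarith
  -- termwise comparison
  set c := δ / (4 * ε) with hc
  have hc0 : 0 ≤ c := by positivity
  let v : ℕ → ℝ := fun n => if n ∈ Finset.Icc 1 N then δ / 24 else 0
  have hterm : ∀ n, β⁻¹ ^ n * (orb β n ^ 2 / 2 - ee ε β * orb β n) ≤ c * 2⁻¹ ^ n - v n := by
    intro n
    have hx := hadm.2.1 n
    have h3 : β⁻¹ ^ n ≤ (2⁻¹ : ℝ) ^ n := by
      gcongr; linarith
    by_cases hn : n ∈ Finset.Icc 1 N
    · simp only [v, hn, if_true]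
      rw [Finset.mem_Icc] at hn
      obtain ⟨m, rfl⟩ : ∃ m, n = m + 1 := ⟨n - 1, by omega⟩
      obtain ⟨e1, e2⟩ := orb_start δ N h0 hδ1 m (by omega)
      rw [← hβ] at e1 e2
      have h4 : β⁻¹ ^ (m+1) * orb β (m+1) = δ / β := by
        rw [e1, pow_succ, inv_pow]; field_simp
      have h5 : δ / 3 ≤ δ / β := by gcongr; linarith
      have h6 : orb β (m+1) / 2 - ee ε β ≤ - (1 / 8) := by
        rw [e1]; linarith
      have h7 : 0 ≤ c * 2⁻¹ ^ (m+1) := by positivity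
      calc β⁻¹ ^ (m+1) * (orb β (m+1) ^ 2 / 2 - ee ε β * orb β (m+1))
          = (β⁻¹ ^ (m+1) * orb β (m+1)) * (orb β (m+1) / 2 - ee ε β) := by ring
        _ = (δ / β) * (orb β (m+1) / 2 - ee ε β) := by rw [h4]
        _ ≤ _ := by nlinarith
    · simp only [v, hn, if_false, sub_zero]
      have h6 : orb β n ^ 2 / 2 - ee ε β * orb β n ≤ c := by
        nlinarith
      calc _ ≤ β⁻¹ ^ n * c := by gcongr
        _ ≤ 2⁻¹ ^ n * c := by gcongr
        _ = _ := mul_comm _ _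
  have hv : HasSum v (N * (δ / 24)) := by
    have := hasSum_sum_of_ne_finset_zero (f := v) (s := Finset.Icc 1 N) (L := .unconditional ℕ)
      (fun b hb => by simp only [v, hb, if_false])
    convert this using 1
    rw [Finset.sum_congr rfl (g := fun _ => δ / 24) (fun x hx => by simp only [v, hx, if_true])]
    simp
  have hg : HasSum (fun n : ℕ => (2⁻¹ : ℝ) ^ n) 2 := by
    have := hasSum_geometric_of_lt_one (r := (2⁻¹:ℝ)) (by norm_num) (by norm_num)
    convert this using 1; norm_num
  have hs : Summable fun n => β⁻¹ ^ n * (orb β n ^ 2 / 2 - ee ε β * orb β n) := by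
    refine Summable.of_norm_bounded hg.summable fun n => ?_
    exact term_bd ε β _ n hε (by linarith) (hadm.2.1 n).1 (hadm.2.1 n).2
  have := hasSum_le hterm hs.hasSum ((hg.mul_left c).sub hv)
  refine this.trans ?_
  rw [div_le_iff₀ hε] at hN
  rw [hc, sub_nonpos]
  have : δ / (4 * ε) * 2 = 12 * (δ / 24) / ε := by field_simp; norm_num
  rw [this, div_le_iff₀ hε]
  nlinarith

lemma emu_eq (μ : Measure ℝ) [IsProbabilityMeasure μ] (hμ : μ ≪ li 1) (e : ℝ)
    (h : ∫ x, (x - e) ∂μ = 0) : Emu μ = e := by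
  have hr : μ.restrict (Set.Icc 0 1) = μ := by
    apply Measure.restrict_eq_self_of_ae_mem
    have : ∀ᵐ x ∂(li 1), x ∈ Set.Icc (0:ℝ) 1 := by
      filter_upwards [ae_restrict_mem measurableSet_Ico] with x hx
      exact Set.Ico_subset_Icc_self hx
    exact hμ.ae_le this
  have hi := integrable_li 0 μ hμ
  simp only [sub_zero] at hi
  rw [integral_sub hi (integrable_const e)] at h
  simp at h
  unfold Emu
  rw [hr]; linarith

lemma emu_leb : Emu lebI = 1 / 2 := by
  unfold Emu lebI
  rw [Measure.restrict_restrict measurableSet_Icc, Set.inter_self,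
    integral_Icc_eq_integral_Ioc, ← intervalIntegral.integral_of_le zero_le_one]
  simp

/-- For `F = id` and any `ε > 0`, the self-consistent system has at least two acims:
Lebesgue measure, and a probability measure equivalent to but different from Lebesgue. -/
theorem stmt0 (ε : ℝ) (hε : 0 < ε) :
    Measure.map (Tsc ε id lebI) lebI = lebI ∧
    ∃ μ : Measure ℝ, IsProbabilityMeasure μ ∧ μ ≪ lebI ∧ lebI ≪ μ ∧ μ ≠ lebI ∧
      Measure.map (Tsc ε id μ) μ = μ := by
  constructor
  · have : Tsc ε id lebI = fun x => Int.fract (2 * x) := by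
      funext x; unfold Tsc; rw [emu_leb]; norm_num
    rw [this, lebI_eq, map_beta 2 1 1 1 (by norm_num) (by norm_num) le_rfl (by norm_num)]
    rw [Nat.cast_one, one_smul, ← two_smul ℝ≥0∞, smul_smul]
    rw [ENNReal.ofReal_inv_of_pos (by norm_num)]
    norm_num
    rw [ENNReal.inv_mul_cancel (by norm_num) (by norm_num), one_smul]
  obtain ⟨a, ha2, ha3, hst⟩ := start ε hε
  obtain ⟨β, hβ, s, s', hs, hs', hp, hp'⟩ := exists_beta ε a hε ha2.le ha3 hst
  have hβ2 : 2 < β := lt_of_lt_of_le ha2 hβ.1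
  set e := ee ε β with he
  -- convex combination
  obtain ⟨t, t', ht, ht', htt, hcomb⟩ : ∃ t t' : ℝ, 0 ≤ t ∧ 0 ≤ t' ∧ t + t' = 1 ∧
      t * phi e β s + t' * phi e β s' = 0 := by
    have : (0:ℝ) ∈ segment ℝ (phi e β s) (phi e β s') := by
      rw [segment_eq_Icc (hp.trans hp')]; exact ⟨hp, hp'⟩
    obtain ⟨t, t', h1, h2, h3, h4⟩ := this
    exact ⟨t, t', h1, h2, h3, by simpa using h4⟩
  have := nu_finite β hβ2.le s hs
  have := nu_finite β hβ2.le s' hs'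
  set ν : Measure ℝ := ENNReal.ofReal t • nu β s + ENNReal.ofReal t' • nu β s' with hν
  have : IsFiniteMeasure (ENNReal.ofReal t • nu β s) := Measure.smul_finite _ ENNReal.ofReal_ne_top
  have : IsFiniteMeasure (ENNReal.ofReal t' • nu β s') := Measure.smul_finite _ ENNReal.ofReal_ne_top
  have hνfin : IsFiniteMeasure ν := by rw [hν]; infer_instance
  have hνac : ν ≪ li 1 :=
    Measure.AbsolutelyContinuous.add_left (Measure.smul_absolutelyContinuous.trans (nu_ac β s hs))
      (Measure.smul_absolutelyContinuous.trans (nu_ac β s' hs'))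
  have hacν : li 1 ≤ ν := by
    calc li 1 = ENNReal.ofReal t • li 1 + ENNReal.ofReal t' • li 1 := by
          rw [← add_smul, ← ENNReal.ofReal_add ht ht', htt, ENNReal.ofReal_one, one_smul]
      _ ≤ ν := by
          apply add_le_add
          · gcongr; exact ac_nu β s hs
          · gcongr; exact ac_nu β s' hs'
  have hint : ∫ x, (x - e) ∂ν = 0 := by
    rw [hν, integral_add_measure, integral_smul_measure, integral_smul_measure,
      integral_nu e β hβ2.le s hs, integral_nu e β hβ2.le s' hs', ENNReal.toReal_ofReal ht,
      ENNReal.toReal_ofReal ht']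
    · simpa using hcomb
    · exact integrable_li e _ (Measure.smul_absolutelyContinuous.trans (nu_ac β s hs))
    · exact integrable_li e _ (Measure.smul_absolutelyContinuous.trans (nu_ac β s' hs'))
  have hm : Measurable (fun x : ℝ => Int.fract (β * x)) :=
    measurable_fract.comp (measurable_const_mul β)
  have hinv : Measure.map (fun x => Int.fract (β * x)) ν = ν := by
    rw [hν, Measure.map_add _ _ hm, Measure.map_smul, Measure.map_smul,
      nu_inv β hβ2.le s hs, nu_inv β hβ2.le s' hs']
  have hν0 : ν ≠ 0 := by
    intro h0
    have h1 := hacν Set.univ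
    rw [h0] at h1
    simp [li] at h1
  have : NeZero ν := ⟨hν0⟩
  set μ : Measure ℝ := (ν Set.univ)⁻¹ • ν with hμ
  have hprob : IsProbabilityMeasure μ := isProbabilityMeasureSMul
  have hμac : μ ≪ li 1 := Measure.smul_absolutelyContinuous.trans hνac
  have hE : Emu μ = e := by
    apply emu_eq μ hμac
    rw [hμ, integral_smul_measure, hint, smul_zero]
  refine ⟨μ, hprob, ?_, ?_, ?_, ?_⟩
  · rw [lebI_eq]; exact hμac
  · rw [lebI_eq]
    refine (Measure.absolutelyContinuous_of_le hacν).trans ?_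
    exact Measure.absolutelyContinuous_smul (ENNReal.inv_ne_zero.2 (measure_ne_top ν _))
  · intro h
    rw [h, emu_leb, he, ee, div_eq_div_iff (by norm_num) (by linarith)] at hE
    linarith
  · have hT : Tsc ε id μ = fun x => Int.fract (β * x) := by
      funext x; unfold Tsc; rw [hE, he, ee]
      congr 2
      simp only [id]
      field_simp
      ring
    rw [hT, hμ, Measure.map_smul, hinv]
end

section
/- Assume F ∈ C¹(ℝ,ℝ) with F(0) = 0, F(x) > 0 for all x ≠ 0, and F′(x) = O(1/|log x|) as x → 0⁺. Then there exists ε₁* > 0 such that for every ε with 0 ≤ ε < ε₁*, Lebesgue measure λ is the unique acim of the self-consistent system: every probability measure μ on [0,1] with μ ≪ λ and (T_μ^ε)_*μ = μ is equal to λ. -/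
open MeasureTheory

open Set Filter Topology MeasureTheory

/-- `f` is a nonincreasing nonnegative function on `[0,∞)`, vanishing on `[1,∞)`, with mass `m`,
bounded by `M`. -/
structure DD (m M : ℝ) (f : ℝ → ℝ) : Prop where
  nonneg : ∀ x, 0 ≤ x → 0 ≤ f x
  anti : AntitoneOn f (Ici 0)
  zero : ∀ x, 1 ≤ x → f x = 0
  bdd : f 0 ≤ M
  mass : ∫ x in (0:ℝ)..1, f x = m

/-- transfer operator of `x ↦ β x mod 1`. -/
noncomputable def PF (β : ℝ) (f : ℝ → ℝ) (x : ℝ) : ℝ :=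
  if x < 1 then (1 / β) * ∑ k ∈ Finset.range ⌈β⌉₊, f ((x + k) / β) else 0

/-- the map -/
noncomputable def TT (β : ℝ) (x : ℝ) : ℝ := Int.fract (β * x)

lemma TT_meas (β : ℝ) : Measurable (TT β) := by
  unfold TT; fun_prop

lemma DD.le {m M : ℝ} {f : ℝ → ℝ} (h : DD m M f) {x : ℝ} (hx : 0 ≤ x) : f x ≤ M :=
  (h.anti (by simp) hx hx).trans h.bdd

lemma DD.mono {m M M' : ℝ} {f : ℝ → ℝ} (h : DD m M f) (hM : M ≤ M') : DD m M' f :=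
  ⟨h.nonneg, h.anti, h.zero, h.bdd.trans hM, h.mass⟩

lemma DD.int {m M : ℝ} {f : ℝ → ℝ} (h : DD m M f) {a b : ℝ} (ha : 0 ≤ a) (hb : 0 ≤ b) :
    IntervalIntegrable f volume a b := by
  apply AntitoneOn.intervalIntegrable
  apply h.anti.mono
  intro x hx
  rw [Set.mem_uIcc] at hx
  rcases hx with hx | hx
  · exact ha.trans hx.1
  · exact hb.trans hx.1

/-- bounded measurable times integrable -/
lemma ii_mul {f φ : ℝ → ℝ} {a b B : ℝ} (hf : IntervalIntegrable f volume a b)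
    (hφ : Measurable φ) (hB : ∀ x, |φ x| ≤ B) :
    IntervalIntegrable (fun x => φ x * f x) volume a b := by
  rw [intervalIntegrable_iff] at *
  exact hf.bdd_mul (c := B) hφ.aestronglyMeasurable (Eventually.of_forall hB)

lemma ii_bdd {φ : ℝ → ℝ} {a b B : ℝ}
    (hφ : Measurable φ) (hB : ∀ x, |φ x| ≤ B) :
    IntervalIntegrable φ volume a b := by
  have := ii_mul (a := a) (b := b) (f := fun _ => (1:ℝ)) (by simp) hφ hB
  simpa using this

lemma dual {m M β B : ℝ} {f φ : ℝ → ℝ} (h : DD m M f) (hβ : 2 ≤ β)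
    (hφ : Measurable φ) (hB : ∀ x, |φ x| ≤ B) :
    ∫ x in (0:ℝ)..1, φ (TT β x) * f x = ∫ x in (0:ℝ)..1, φ x * PF β f x := by
  have hβ0 : 0 < β := by linarith
  set N := ⌈β⌉₊ with hN
  have hNβ : β ≤ N := Nat.le_ceil β
  have hN1 : 1 ≤ (N:ℝ) / β := by rw [le_div_iff₀ hβ0]; linarith
  have i1 : ∀ a b : ℝ, 0 ≤ a → 0 ≤ b →
      IntervalIntegrable (fun x => φ (TT β x) * f x) volume a b := fun a b ha hb =>
    ii_mul (φ := fun x => φ (TT β x)) (h.int ha hb) (hφ.comp (TT_meas β)) (fun x => hB _)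
  have e1 : ∫ x in (0:ℝ)..1, φ (TT β x) * f x = ∫ x in (0:ℝ)..(N / β), φ (TT β x) * f x := by
    rw [← intervalIntegral.integral_add_adjacent_intervals (b := 1) (i1 0 1 (by simp) (by simp))
      (i1 1 (N / β) (by simp) (by positivity))]
    have : ∫ x in (1:ℝ)..(N / β), φ (TT β x) * f x = ∫ x in (1:ℝ)..(N / β), (0:ℝ) := by
      apply intervalIntegral.integral_congr
      intro x hx
      rw [Set.uIcc_of_le hN1] at hx
      simp [h.zero x hx.1]
    rw [this]; simp
  have e2 : ∫ x in (0:ℝ)..(N / β), φ (TT β x) * f x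
      = (1 / β) * ∫ y in (0:ℝ)..N, φ (Int.fract y) * f (y / β) := by
    have := intervalIntegral.integral_comp_mul_left (a := 0) (b := N / β)
      (fun y => φ (Int.fract y) * f (y / β)) hβ0.ne'
    rw [mul_div_cancel₀ _ hβ0.ne', mul_zero] at this
    rw [one_div, ← smul_eq_mul, ← this]
    apply intervalIntegral.integral_congr
    intro x _
    simp only [TT]
    rw [mul_div_cancel_left₀ _ hβ0.ne']
  have i2 : ∀ a b : ℝ, 0 ≤ a → 0 ≤ b →
      IntervalIntegrable (fun y => φ (Int.fract y) * f (y / β)) volume a b := by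
    intro a b ha hb
    refine ii_mul (φ := fun x => φ (Int.fract x)) ?_ (by fun_prop) (fun x => hB _)
    have := (h.int (a := a / β) (b := b / β) (by positivity) (by positivity)).comp_mul_left (c := β⁻¹)
    simpa [div_eq_mul_inv, mul_comm, hβ0.ne'] using this
  have e3 : ∫ y in (0:ℝ)..N, φ (Int.fract y) * f (y / β)
      = ∑ k ∈ Finset.range N, ∫ y in (0:ℝ)..1, φ (Int.fract y) * f ((y + k) / β) := by
    have := intervalIntegral.sum_integral_adjacent_intervals (μ := volume)
      (f := fun y => φ (Int.fract y) * f (y / β)) (a := fun k : ℕ => (k:ℝ)) (n := N)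
      (fun k _ => i2 _ _ (by positivity) (by positivity))
    simp only [Nat.cast_zero] at this
    rw [← this]
    apply Finset.sum_congr rfl
    intro k _
    have := intervalIntegral.integral_comp_add_right (a := 0) (b := 1)
      (fun y => φ (Int.fract y) * f (y / β)) (k:ℝ)
    simp only [Int.fract_add_natCast, zero_add] at this
    rw [this, add_comm (1:ℝ)]; push_cast; rfl
  rw [e1, e2, e3]
  rw [← intervalIntegral.integral_finsetSum, ← intervalIntegral.integral_const_mul]
  · apply intervalIntegral.integral_congr_Ioo_of_le (by norm_num)
    intro x hx
    have : Int.fract x = x := Int.fract_eq_self.2 ⟨hx.1.le, hx.2⟩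
    simp only [PF, hx.2, if_true, this, ← hN]
    rw [← Finset.mul_sum]; ring
  · intro k _
    have := (i2 (0 + k) (1 + k) (by positivity) (by positivity)).comp_add_right (c := (k:ℝ))
    simpa using this

lemma PF_anti {m M β : ℝ} {f : ℝ → ℝ} (h : DD m M f) (hβ : 2 ≤ β) :
    AntitoneOn (PF β f) (Ici 0) := by
  have hβ0 : 0 < β := by linarith
  intro x hx y hy hxy
  simp only [mem_Ici] at hx hy
  unfold PF
  by_cases h1 : y < 1
  · rw [if_pos h1, if_pos (lt_of_le_of_lt hxy h1)]
    gcongr with k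
    apply h.anti
    · show (0:ℝ) ≤ _
      positivity
    · show (0:ℝ) ≤ _
      positivity
    · gcongr
  · rw [if_neg h1]
    split_ifs
    · apply mul_nonneg (by positivity)
      apply Finset.sum_nonneg
      intro k _
      apply h.nonneg; positivity
    · rfl

lemma PF_mem {m M β : ℝ} {f : ℝ → ℝ} (h : DD m M f) (hβ : 2 ≤ β) :
    DD m (M / 2 + m) (PF β f) := by
  have hβ0 : 0 < β := by linarith
  refine ⟨?_, PF_anti h hβ, ?_, ?_, ?_⟩
  · intro x hx
    unfold PF
    split_ifs
    · apply mul_nonneg (by positivity)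
      apply Finset.sum_nonneg
      intro k _
      apply h.nonneg; positivity
    · rfl
  · intro x hx
    unfold PF
    rw [if_neg (by linarith)]
  · unfold PF
    rw [if_pos (by norm_num)]
    obtain ⟨n, hn⟩ : ∃ n, ⌈β⌉₊ = n + 1 := ⟨⌈β⌉₊ - 1, by
      have : 0 < ⌈β⌉₊ := Nat.ceil_pos.2 hβ0
      omega⟩
    have hnβ : (n:ℝ) < β := by
      apply Nat.lt_ceil.1; omega
    rw [hn, Finset.sum_range_succ']
    have key := AntitoneOn.sum_le_integral (x₀ := 0) (a := n) (f := fun y => f (y / β)) (by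
      intro x hx y hy hxy
      apply h.anti
      · show (0:ℝ) ≤ _
        have := hx.1
        positivity
      · show (0:ℝ) ≤ _
        have := hy.1
        positivity
      · show x / β ≤ y / β
        gcongr)
    simp only [zero_add] at key
    have e : ∫ y in (0:ℝ)..n, f (y / β) = β * ∫ y in (0:ℝ)..(n / β), f y := by
      rw [intervalIntegral.integral_comp_div _ hβ0.ne']; simp
    rw [e] at key
    have le1 : ∫ y in (0:ℝ)..(n / β), f y ≤ m := by
      rw [← h.mass]
      apply intervalIntegral.integral_mono_interval le_rfl (by positivity)
      · rw [div_le_one hβ0]; exact hnβ.le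
      · rw [Filter.EventuallyLE, ae_restrict_iff' measurableSet_Ioc]
        exact Eventually.of_forall fun x hx => h.nonneg x hx.1.le
      · exact h.int le_rfl (by norm_num)
    have f0 := h.nonneg 0 le_rfl
    have : (1 / β) * f 0 ≤ M / 2 := by
      have : 1 / β ≤ 1 / 2 := by gcongr
      nlinarith [h.bdd]
    have h2 : (1 / β) * ∑ i ∈ Finset.range n, f (((i + 1 : ℕ):ℝ) / β) ≤ m := by
      rw [one_div, inv_mul_le_iff₀ hβ0]
      exact key.trans (by gcongr)
    simp only [zero_add, Nat.cast_zero, zero_div] 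
    rw [mul_add]; linarith
  · have := dual (φ := fun _ => 1) (B := 1) h hβ measurable_const (by simp)
    simp only [one_mul] at this
    rw [← this, h.mass]

lemma PF_ge {m M β : ℝ} {f : ℝ → ℝ} (h : DD m M f) (hβ : 2 ≤ β) {x : ℝ} (h0 : 0 ≤ x)
    (h1 : x < 1) : (1 / β) * f (x / β) ≤ PF β f x := by
  have hβ0 : 0 < β := by linarith
  unfold PF
  rw [if_pos h1]
  gcongr
  have := Finset.single_le_sum (f := fun k : ℕ => f ((x + k) / β)) (s := Finset.range ⌈β⌉₊)
    (fun k _ => h.nonneg _ (by positivity)) (a := 0) (by simpa using hβ0)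
  simpa using this

lemma quarter {m : ℝ} {f : ℝ → ℝ} (h : DD m (3 * m) f) : m / 3 ≤ f (1 / 4) := by
  have e := intervalIntegral.integral_add_adjacent_intervals (a := 0) (b := 1/4) (c := 1)
    (h.int (a := 0) (b := 1/4) (by norm_num) (by norm_num))
    (h.int (a := 1/4) (b := 1) (by norm_num) (by norm_num))
  rw [h.mass] at e
  have e1 : ∫ x in (0:ℝ)..(1/4), f x ≤ ∫ x in (0:ℝ)..(1/4), 3 * m :=
    intervalIntegral.integral_mono_on (by norm_num) (h.int (by norm_num) (by norm_num)) (by simp)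
      (fun x hx => h.le hx.1)
  have e2 : ∫ x in (1/4:ℝ)..1, f x ≤ ∫ x in (1/4:ℝ)..1, f (1/4) :=
    intervalIntegral.integral_mono_on (by norm_num) (h.int (by norm_num) (by norm_num)) (by simp)
      (fun x hx => h.anti (by simp) (by simp only [mem_Ici]; linarith [hx.1]) hx.1)
  simp only [intervalIntegral.integral_const, smul_eq_mul] at e1 e2
  linarith

lemma ind_int (a : ℝ) : ∫ x in (0:ℝ)..1, (if x < 1 then a else 0) = a := by
  rw [intervalIntegral.integral_congr_Ioo_of_le (g := fun _ => a) (by norm_num)]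
  · simp
  · intro x hx; simp [hx.2]

lemma step_mem {m β c : ℝ} {f : ℝ → ℝ} (h : DD m (3 * m) f) (hm : 0 ≤ m) (hβ : 2 ≤ β)
    (hc : c = 1 / (3 * β ^ 2)) :
    DD ((1 - c) * m) (3 * m) (fun x => PF β (PF β f) x - if x < 1 then c * m else 0) := by
  have hβ0 : 0 < β := by linarith
  have hc0 : 0 < c := by rw [hc]; positivity
  have h1 := PF_mem h hβ
  have h2 := PF_mem h1 hβ
  have lb : ∀ x, 0 ≤ x → x < 1 → c * m ≤ PF β (PF β f) x := by
    intro x h0 hx1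
    have hxb : x / β < 1 := by rw [div_lt_one hβ0]; linarith
    have a1 := PF_ge h1 hβ h0 hx1
    have a2 := PF_ge h hβ (x := x / β) (by positivity) hxb
    have a3 : f (1/4) ≤ f (x / β / β) := by
      apply h.anti
      · show (0:ℝ) ≤ _
        positivity
      · show (0:ℝ) ≤ _
        norm_num
      · rw [div_div, div_le_iff₀ (by positivity)]; nlinarith
    have a4 := quarter h
    calc c * m = (1 / β) * ((1 / β) * (m / 3)) := by rw [hc]; field_simp
      _ ≤ (1 / β) * ((1 / β) * f (x / β / β)) := by gcongr; linarith
      _ ≤ (1 / β) * PF β f (x / β) := by gcongr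
      _ ≤ _ := a1
  have z : ∀ x, 1 ≤ x → PF β (PF β f) x = 0 := h2.zero
  refine ⟨?_, ?_, ?_, ?_, ?_⟩
  · intro x hx
    by_cases hx1 : x < 1
    · simp only [hx1, if_true]; linarith [lb x hx hx1]
    · simp [hx1, z x (not_lt.1 hx1)]
  · intro x hx y hy hxy
    have := h2.anti hx hy hxy
    by_cases hy1 : y < 1
    · simp only [hy1, lt_of_le_of_lt hxy hy1, if_true]; linarith
    · simp only [hy1, if_false, z y (not_lt.1 hy1)]
      by_cases hx1 : x < 1
      · simp only [hx1, if_true]; linarith [lb x hx hx1]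
      · simp [hx1, z x (not_lt.1 hx1)]
  · intro x hx
    simp [z x hx, not_lt.2 hx]
  · have := h2.bdd
    simp only [zero_lt_one, if_true]
    nlinarith [mul_nonneg hc0.le hm]
  · rw [intervalIntegral.integral_sub (h2.int le_rfl zero_le_one), h2.mass, ind_int]
    · ring
    · apply AntitoneOn.intervalIntegrable
      intro x hx y hy hxy
      dsimp only
      split_ifs with q1 q2 q2
      · exact le_rfl
      · exfalso; linarith
      · positivity
      · exact le_rfl

lemma DD.mass_nonneg {m M : ℝ} {f : ℝ → ℝ} (h : DD m M f) : 0 ≤ m := by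
  rw [← h.mass]
  exact intervalIntegral.integral_nonneg (by norm_num) (fun x hx => h.nonneg x hx.1)

lemma int_le {m M : ℝ} {f φ : ℝ → ℝ} (h : DD m M f) (hB : ∀ x, |φ x| ≤ 1) :
    |∫ x in (0:ℝ)..1, φ x * f x| ≤ m := by
  rw [← h.mass, ← Real.norm_eq_abs]
  apply intervalIntegral.norm_integral_le_of_norm_le (by norm_num) _ (h.int le_rfl zero_le_one)
  refine Eventually.of_forall fun x hx => ?_
  rw [norm_mul, Real.norm_eq_abs, Real.norm_eq_abs, abs_of_nonneg (h.nonneg x hx.1.le)]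
  nlinarith [hB x, h.nonneg x hx.1.le]

lemma it_meas (β : ℝ) (n : ℕ) : Measurable ((TT β)^[n]) := (TT_meas β).iterate n

lemma contr {β c : ℝ} (hβ : 2 ≤ β) (hc : c = 1 / (3 * β ^ 2)) {φ : ℝ → ℝ} 
    (hφ : Measurable φ) (hB : ∀ x, |φ x| ≤ 1) (n : ℕ) : ∀ (m : ℝ) (f g : ℝ → ℝ),
    DD m (3 * m) f → DD m (3 * m) g →
    |(∫ x in (0:ℝ)..1, φ ((TT β)^[3 * n] x) * f x) - ∫ x in (0:ℝ)..1, φ ((TT β)^[3 * n] x) * g x|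
      ≤ 2 * m * (1 - c) ^ n := by
  have hc12 : c ≤ 1 / 12 := by
    rw [hc]
    apply one_div_le_one_div_of_le (by norm_num); nlinarith
  have hc0 : 0 < c := by rw [hc]; positivity
  induction n with
  | zero =>
    intro m f g hf hg
    simp only [mul_zero, Function.iterate_zero, id, pow_zero, mul_one]
    have := int_le hf hB
    have := int_le hg hB
    rw [abs_le] at *
    constructor <;> linarith
  | succ n ih =>
    intro m f g hf hg
    have hm := hf.mass_nonneg
    set ψ : ℝ → ℝ := fun x => φ ((TT β)^[3 * n] x) with hψ
    have ψm : Measurable ψ := hφ.comp (it_meas β _)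
    have ψB : ∀ x, |ψ x| ≤ 1 := fun x => hB _
    have hT := TT_meas β
    have key : ∀ f, DD m (3 * m) f → ∃ f', DD ((1 - c) * m) (3 * ((1 - c) * m)) f' ∧
        ∫ x in (0:ℝ)..1, φ ((TT β)^[3 * (n + 1)] x) * f x =
          (∫ x in (0:ℝ)..1, ψ x * f' x) + c * m * ∫ x in (0:ℝ)..1, ψ (TT β x) := by
      intro f hf
      have s := step_mem hf hm hβ hc
      refine ⟨_, (PF_mem s hβ).mono ?_, ?_⟩
      · nlinarith
      · rw [← dual s hβ ψm ψB]
        have e : ∀ x, φ ((TT β)^[3 * (n + 1)] x) = ψ (TT β (TT β (TT β x))) := by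
          intro x
          rw [show 3 * (n + 1) = 3 * n + 1 + 1 + 1 by ring]
          simp only [hψ, Function.iterate_succ_apply]
        simp only [e]
        rw [dual (φ := fun x => ψ (TT β (TT β x))) hf hβ (by fun_prop) (fun x => ψB _),
          dual (φ := fun x => ψ (TT β x)) (PF_mem hf hβ) hβ (by fun_prop) (fun x => ψB _)]
        rw [← intervalIntegral.integral_const_mul, ← intervalIntegral.integral_add]
        · apply intervalIntegral.integral_congr_Ioo_of_le (by norm_num)
          intro x hx
          simp only [hx.2, if_true]; ring
        · exact ii_mul (φ := fun x => ψ (TT β x)) (s.int le_rfl zero_le_one) (by fun_prop) 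
            (fun x => ψB _)
        · exact (ii_bdd (φ := fun x => ψ (TT β x)) (by fun_prop) (fun x => ψB _)).const_mul _
    obtain ⟨f', hf', ef⟩ := key f hf
    obtain ⟨g', hg', eg⟩ := key g hg
    rw [ef, eg, add_sub_add_right_eq_sub]
    refine (ih _ f' g' hf' hg').trans (le_of_eq ?_)
    ring

lemma weak_sets (ν : Measure ℝ) [IsFiniteMeasure ν] (u : ℕ → ℝ → ℝ) (hu : ∀ n, Measurable (u n))
    (hb : ∀ n x, |u n x| ≤ 2) (h0 : Tendsto (fun n => ∫ x, u n x ∂ν) atTop (𝓝 0))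
    (hI : ∀ a, Tendsto (fun n => ∫ x in Iio a, u n x ∂ν) atTop (𝓝 0)) (s : Set ℝ)
    (hs : MeasurableSet s) : Tendsto (fun n => ∫ x in s, u n x ∂ν) atTop (𝓝 0) := by
  have ui : ∀ n, Integrable (u n) ν := fun n =>
    Integrable.of_bound (hu n).aestronglyMeasurable 2 (Eventually.of_forall (hb n))
  induction s, hs using MeasurableSpace.induction_on_inter
    (borel_eq_generateFrom_Iio ℝ ▸ (BorelSpace.measurable_eq : _ = borel ℝ)) isPiSystem_Iio with
  | empty => simp
  | basic t ht =>
    obtain ⟨a, rfl⟩ := ht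
    exact hI a
  | compl t ht ih =>
    have : ∀ n, ∫ x in tᶜ, u n x ∂ν = ∫ x, u n x ∂ν - ∫ x in t, u n x ∂ν := fun n =>
      setIntegral_compl ht (ui n)
    simp only [this]
    simpa using h0.sub ih
  | iUnion f hd hm ih =>
    have e : ∀ n, ∫ x in ⋃ i, f i, u n x ∂ν = ∑' i, ∫ x in f i, u n x ∂ν := fun n =>
      integral_iUnion hm hd (ui n).integrableOn
    simp only [e]
    have := tendsto_tsum_of_dominated_convergence (𝓕 := atTop) (f := fun n i => ∫ x in f i, u n x ∂ν)
      (g := fun _ => (0:ℝ)) (bound := fun i => 2 * ν.real (f i)) ?_ ih ?_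
    · simpa using this
    · apply Summable.mul_left
      have h1 : ∑' i, ν (f i) ≠ ⊤ := by
        rw [← measure_iUnion hd hm]; exact measure_ne_top _ _
      exact ENNReal.summable_toReal h1
    · refine Eventually.of_forall fun n i => ?_
      exact norm_setIntegral_le_of_norm_le_const (measure_lt_top _ _) (fun x _ => hb n x)

lemma weak_L1 (ν : Measure ℝ) [IsFiniteMeasure ν] (u : ℕ → ℝ → ℝ) (hu : ∀ n, Measurable (u n))
    (hb : ∀ n x, |u n x| ≤ 2) (h0 : Tendsto (fun n => ∫ x, u n x ∂ν) atTop (𝓝 0))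
    (hI : ∀ a, Tendsto (fun n => ∫ x in Iio a, u n x ∂ν) atTop (𝓝 0)) (h : ℝ → ℝ)
    (hh : Integrable h ν) : Tendsto (fun n => ∫ x, u n x * h x ∂ν) atTop (𝓝 0) := by
  have im : ∀ n (g : ℝ → ℝ), Integrable g ν → Integrable (fun x => u n x * g x) ν := fun n g hg =>
    hg.bdd_mul (c := 2) (hu n).aestronglyMeasurable (Eventually.of_forall (hb n))
  refine Integrable.induction
    (fun g : ℝ → ℝ => Tendsto (fun n => ∫ x, u n x * g x ∂ν) atTop (𝓝 0)) ?_ ?_ ?_ ?_ hh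
  · intro c s hs _
    have : ∀ n, ∫ x, u n x * s.indicator (fun _ => c) x ∂ν = (∫ x in s, u n x ∂ν) * c := by
      intro n
      rw [← integral_mul_const, ← integral_indicator hs]
      congr 1; ext x
      by_cases hx : x ∈ s <;> simp [hx]
    simp only [this]
    simpa using (weak_sets ν u hu hb h0 hI s hs).mul_const c
  · intro f g _ hf hg tf tg
    have : ∀ n, ∫ x, u n x * (f + g) x ∂ν = ∫ x, u n x * f x ∂ν + ∫ x, u n x * g x ∂ν := by
      intro n
      rw [← integral_add (im n f hf) (im n g hg)]
      simp [mul_add]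
    simp only [this]
    simpa using tf.add tg
  · rw [← isSeqClosed_iff_isClosed]
    intro F f hF hlim
    simp only [mem_ofPred_eq] at hF ⊢
    rw [Metric.tendsto_atTop]
    intro ε hε
    obtain ⟨k, hk⟩ := (Metric.tendsto_atTop.1 hlim (ε / 4) (by positivity))
    have hk := hk k le_rfl
    obtain ⟨n0, hn0⟩ := Metric.tendsto_atTop.1 (hF k) (ε / 4) (by positivity)
    refine ⟨n0, fun n hn => ?_⟩
    have a1 := hn0 n hn
    rw [dist_zero_right] at a1 ⊢
    have hFi := L1.integrable_coeFn (F k)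
    have hfi := L1.integrable_coeFn f
    have e : ∫ x, u n x * f x ∂ν = ∫ x, u n x * F k x ∂ν - ∫ x, u n x * (F k x - f x) ∂ν := by
      rw [← integral_sub (im n _ hFi) (im n (fun x => F k x - f x) (hFi.sub hfi))]
      congr 1; ext x; ring
    have a2 : ‖∫ x, u n x * (F k x - f x) ∂ν‖ ≤ 2 * dist (F k) f := by
      rw [dist_eq_norm, L1.norm_eq_integral_norm, ← integral_const_mul]
      apply norm_integral_le_of_norm_le ((L1.integrable_coeFn (F k - f)).norm.const_mul 2)
      filter_upwards [Lp.coeFn_sub (F k) f] with x hx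
      rw [hx, norm_mul]
      exact mul_le_mul_of_nonneg_right (hb n x) (norm_nonneg _)
    rw [e]
    calc _ ≤ _ := norm_sub_le _ _
      _ < ε := by linarith
  · intro f g hfg _ tf
    refine tf.congr fun n => ?_
    apply integral_congr_ae
    filter_upwards [hfg] with x hx
    rw [hx]

lemma lebI_int (g : ℝ → ℝ) : ∫ x, g x ∂lebI = ∫ x in (0:ℝ)..1, g x := by
  rw [lebI, integral_Icc_eq_integral_Ioc, intervalIntegral.integral_of_le zero_le_one]

lemma ind_mem {a : ℝ} (ha : 0 ≤ a) : DD a a (fun x => if x < 1 then a else 0) := by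
  refine ⟨?_, ?_, ?_, ?_, ind_int a⟩
  · intro x _; split_ifs <;> simp [ha]
  · intro x hx y hy hxy
    dsimp only
    split_ifs with q1 q2 q2
    · exact le_rfl
    · exfalso; linarith
    · positivity
    · exact le_rfl
  · intro x hx; simp [not_lt.2 hx]
  · simp

lemma conv_Iio {β : ℝ} (hβ : 2 ≤ β) {φ : ℝ → ℝ} 
    (hφ : Measurable φ) (hB : ∀ x, |φ x| ≤ 1) (a : ℝ) :
    Tendsto (fun n : ℕ => ∫ x in (0:ℝ)..1, (if x < a then 1 else 0) *
      (φ ((TT β)^[3 * n] x) - ∫ y in (0:ℝ)..1, φ ((TT β)^[3 * n] y))) atTop (𝓝 0) := by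
  set f : ℝ → ℝ := fun x => if x < 1 then 1 + (if x < a then 1 else 0) else 0 with hf
  set m := ∫ x in (0:ℝ)..1, f x with hm
  have anti : AntitoneOn f (Ici 0) := by
    intro x hx y hy hxy
    simp only [hf]
    split_ifs <;> linarith
  have fi : IntervalIntegrable f volume 0 1 := by
    apply (anti.mono _).intervalIntegrable
    intro x hx
    rw [uIcc_of_le zero_le_one] at hx
    exact hx.1
  have m1 : 1 ≤ m := by
    have e := ind_int 1
    rw [hm]
    refine e.symm.le.trans ?_
    apply intervalIntegral.integral_mono_on zero_le_one ((ind_mem zero_le_one).int le_rfl zero_le_one) fi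
    intro x _
    simp only [hf]
    split_ifs <;> norm_num
  have hD : DD m (3 * m) f := by
    refine ⟨?_, anti, ?_, ?_, rfl⟩
    · intro x _
      simp only [hf]
      split_ifs <;> norm_num
    · intro x hx
      simp [hf, not_lt.2 hx]
    · simp only [hf]
      split_ifs <;> linarith
  have hg := (ind_mem (a := m) (by linarith)).mono (M' := 3 * m) (by linarith)
  have key := fun n => contr hβ rfl hφ hB n m _ _ hD hg
  set c := 1 / (3 * β ^ 2) with hc
  have hc12 : c ≤ 1 / 12 := by
    rw [hc]
    apply one_div_le_one_div_of_le (by norm_num); nlinarith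
  have hc0 : 0 < c := by rw [hc]; positivity
  have lim : Tendsto (fun n : ℕ => 2 * m * (1 - c) ^ n) atTop (𝓝 0) := by
    simpa using (tendsto_pow_atTop_nhds_zero_of_lt_one (r := 1 - c) (by linarith) (by linarith)).const_mul (2 * m)
  apply squeeze_zero_norm _ lim
  intro n
  refine le_trans (le_of_eq ?_) (key n)
  rw [Real.norm_eq_abs]
  congr 1
  have hψm : Measurable (fun x => φ ((TT β)^[3 * n] x)) := hφ.comp (it_meas β _)
  have hψB : ∀ x, |φ ((TT β)^[3 * n] x)| ≤ 1 := fun x => hB _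
  set ψ : ℝ → ℝ := fun x => φ ((TT β)^[3 * n] x) with hψ
  change (∫ x in (0:ℝ)..1, (if x < a then 1 else 0) * (ψ x - ∫ y in (0:ℝ)..1, ψ y))
    = (∫ x in (0:ℝ)..1, ψ x * f x) - ∫ x in (0:ℝ)..1, ψ x * (if x < 1 then m else 0)
  set A := ∫ y in (0:ℝ)..1, ψ y with hA
  set χ : ℝ → ℝ := fun x => if x < a then 1 else 0 with hχ
  have χm : Measurable χ := Measurable.ite measurableSet_Iio measurable_const measurable_const
  have χB : ∀ x, |χ x| ≤ 1 := by
    intro x; simp only [hχ]; split_ifs <;> simp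
  have iχ : IntervalIntegrable χ volume 0 1 := ii_bdd χm χB
  have iψ : IntervalIntegrable ψ volume 0 1 := ii_bdd hψm hψB
  have iχψ : IntervalIntegrable (fun x => χ x * ψ x) volume 0 1 := ii_mul iψ χm χB
  have e1 : ∫ x in (0:ℝ)..1, ψ x * f x = A + ∫ x in (0:ℝ)..1, χ x * ψ x := by
    rw [hA, ← intervalIntegral.integral_add iψ iχψ]
    apply intervalIntegral.integral_congr_Ioo_of_le zero_le_one
    intro x hx
    simp only [hf, hx.2, if_true, hχ]; ring
  have e2 : ∫ x in (0:ℝ)..1, ψ x * (if x < 1 then m else 0) = A * m := by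
    rw [hA, ← intervalIntegral.integral_mul_const]
    apply intervalIntegral.integral_congr_Ioo_of_le zero_le_one
    intro x hx
    simp only [hx.2, if_true]
  have e3 : m = 1 + ∫ x in (0:ℝ)..1, χ x := by
    have : (1:ℝ) = ∫ x in (0:ℝ)..1, (1:ℝ) := by simp
    rw [hm]
    have e5 : ∫ x in (0:ℝ)..1, (1 + χ x) = 1 + ∫ x in (0:ℝ)..1, χ x := by
      rw [intervalIntegral.integral_add (by simp) iχ, ← this]
    rw [← e5]
    apply intervalIntegral.integral_congr_Ioo_of_le zero_le_one
    intro x hx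
    simp only [hf, hx.2, if_true, hχ]
  have e4 : ∫ x in (0:ℝ)..1, χ x * (ψ x - A) = (∫ x in (0:ℝ)..1, χ x * ψ x) - A * ∫ x in (0:ℝ)..1, χ x := by
    rw [← intervalIntegral.integral_const_mul, ← intervalIntegral.integral_sub iχψ (iχ.const_mul A)]
    congr 1; ext x; ring
  rw [e1, e2, e4, e3]; ring

lemma abs_int_le {φ : ℝ → ℝ} (hB : ∀ x, |φ x| ≤ 1) (a b : ℝ) :
    |∫ y in a..b, φ y| ≤ |b - a| := by
  have := intervalIntegral.norm_integral_le_of_norm_le_const (a := a) (b := b) (C := 1) (f := φ)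
    (fun x _ => hB x)
  simpa using this

instance : IsFiniteMeasure lebI := by unfold lebI; infer_instance

lemma main_lim {β : ℝ} (hβ : 2 ≤ β) {φ : ℝ → ℝ} 
    (hφ : Measurable φ) (hB : ∀ x, |φ x| ≤ 1) (μ : Measure ℝ) [IsProbabilityMeasure μ]
    (hac : μ ≪ lebI) (hinv : Measure.map (TT β) μ = μ) :
    Tendsto (fun n : ℕ => ∫ x in (0:ℝ)..1, φ ((TT β)^[3 * n] x)) atTop (𝓝 (∫ x, φ x ∂μ)) := by
  set A : ℕ → ℝ := fun n => ∫ x in (0:ℝ)..1, φ ((TT β)^[3 * n] x) with hA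
  have ψm : ∀ n, Measurable (fun x => φ ((TT β)^[3 * n] x)) := fun n => hφ.comp (it_meas β _)
  have hA1 : ∀ n, |A n| ≤ 1 := fun n => by
    simpa using abs_int_le (φ := fun x => φ ((TT β)^[3 * n] x)) (fun x => hB _) 0 1
  set u : ℕ → ℝ → ℝ := fun n x => φ ((TT β)^[3 * n] x) - A n with hu
  have um : ∀ n, Measurable (u n) := fun n => (ψm n).sub measurable_const
  have ub : ∀ n x, |u n x| ≤ 2 := fun n x => by
    have h1 := hA1 n
    have h2 := hB ((TT β)^[3 * n] x)
    simp only [hu]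
    rw [abs_le] at *
    constructor <;> linarith
  have w := weak_L1 lebI u um ub ?_ ?_ (fun x => (μ.rnDeriv lebI x).toReal)
    Measure.integrable_toReal_rnDeriv
  · have e : ∀ n, ∫ x, u n x * (μ.rnDeriv lebI x).toReal ∂lebI = ∫ x, φ x ∂μ - A n := by
      intro n
      have := integral_rnDeriv_smul (μ := μ) (ν := lebI) hac (f := u n)
      simp only [smul_eq_mul] at this
      simp only [mul_comm (u n _)]
      rw [this]
      simp only [hu]
      have mp : MeasurePreserving (TT β) μ μ := ⟨TT_meas β, hinv⟩
      have i1 : Integrable (fun x => φ ((TT β)^[3 * n] x)) μ :=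
        Integrable.of_bound (ψm n).aestronglyMeasurable 1 (Eventually.of_forall fun x => hB _)
      rw [integral_sub i1 (integrable_const _)]
      have mp2 := (mp.iterate (3 * n)).map_eq
      conv_rhs => rw [← mp2]
      rw [integral_map (it_meas β _).aemeasurable hφ.aestronglyMeasurable]
      simp
    simp only [e] at w
    simpa using w.const_sub (∫ x, φ x ∂μ)
  · have : ∀ n, ∫ x, u n x ∂lebI = 0 := by
      intro n
      rw [lebI_int]
      simp only [hu]
      rw [intervalIntegral.integral_sub (ii_bdd (ψm n) (fun x => hB _)) (by simp)]
      simp [hA]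
    simp [this]
  · intro a
    refine (conv_Iio hβ hφ hB a).congr fun n => ?_
    rw [← integral_indicator measurableSet_Iio, lebI_int]
    congr 1; ext x
    by_cases hx : x < a <;> simp [hx, hu, hA]

lemma iter_mem {β : ℝ} (hβ : 2 ≤ β) (n : ℕ) : ∃ f, DD 1 2 f ∧ ∀ φ : ℝ → ℝ, Measurable φ →
    (∀ x, |φ x| ≤ 1) → ∫ x in (0:ℝ)..1, φ ((TT β)^[n] x) = ∫ x in (0:ℝ)..1, φ x * f x := by
  induction n with
  | zero =>
    refine ⟨_, (ind_mem zero_le_one).mono (by norm_num), fun φ _ _ => ?_⟩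
    apply intervalIntegral.integral_congr_Ioo_of_le zero_le_one
    intro x hx
    simp [hx.2]
  | succ n ih =>
    obtain ⟨f, hf, h⟩ := ih
    refine ⟨_, (PF_mem hf hβ).mono (by norm_num), fun φ hφ hB => ?_⟩
    rw [← dual hf hβ hφ hB, ← h (fun x => φ (TT β x)) (hφ.comp (TT_meas β)) (fun x => hB _)]
    simp only [Function.iterate_succ_apply']

lemma incr {β : ℝ} (hβ : 2 ≤ β) {φ : ℝ → ℝ} 
    (hφ : Measurable φ) (hB : ∀ x, |φ x| ≤ 1) :
    |(∫ x in (0:ℝ)..1, φ (TT β x)) - ∫ x in (0:ℝ)..1, φ x| ≤ β - 2 := by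
  have hβ0 : 0 < β := by linarith
  have fm : Measurable (fun y => φ (Int.fract y)) := by fun_prop
  have ii : ∀ a b : ℝ, IntervalIntegrable (fun y => φ (Int.fract y)) volume a b := fun a b =>
    ii_bdd fm (fun x => hB _)
  have e := intervalIntegral.integral_comp_mul_left (a := 0) (b := 1)
    (fun y => φ (Int.fract y)) hβ0.ne'
  have e0 : ∫ x in (0:ℝ)..1, φ (Int.fract x) = ∫ x in (0:ℝ)..1, φ x := by
    apply intervalIntegral.integral_congr_Ioo_of_le zero_le_one
    intro x hx
    simp [Int.fract_eq_self.2 ⟨hx.1.le, hx.2⟩]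
  have e1 : ∫ x in (1:ℝ)..2, φ (Int.fract x) = ∫ x in (0:ℝ)..1, φ x := by
    have := intervalIntegral.integral_comp_add_right (a := 0) (b := 1)
      (fun y => φ (Int.fract y)) 1
    simp only [Int.fract_add_one, zero_add] at this
    rw [← e0, this]; norm_num
  have e2 : ∫ x in (0:ℝ)..β, φ (Int.fract x)
      = 2 * (∫ x in (0:ℝ)..1, φ x) + ∫ x in (2:ℝ)..β, φ (Int.fract x) := by
    rw [← intervalIntegral.integral_add_adjacent_intervals (ii 0 2) (ii 2 β),
      ← intervalIntegral.integral_add_adjacent_intervals (ii 0 1) (ii 1 2), e0, e1]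
    ring
  simp only [mul_zero, mul_one, smul_eq_mul] at e
  simp only [TT]
  rw [e, e2]
  have b1 := abs_int_le (φ := fun y => φ (Int.fract y)) (fun x => hB _) 2 β
  have b2 := abs_int_le hB 0 1
  rw [abs_of_nonneg (by linarith : 0 ≤ β - 2)] at b1
  simp only [sub_zero, abs_one] at b2
  set X := ∫ x in (0:ℝ)..1, φ x
  set Y := ∫ x in (2:ℝ)..β, φ (Int.fract x)
  rw [show β⁻¹ * (2 * X + Y) - X = (Y - (β - 2) * X) / β by field_simp; ring, abs_div,
    abs_of_pos hβ0, div_le_iff₀ hβ0]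
  rw [abs_le] at *
  constructor <;> nlinarith

lemma incr_n {β : ℝ} (hβ : 2 ≤ β) {φ : ℝ → ℝ} 
    (hφ : Measurable φ) (hB : ∀ x, |φ x| ≤ 1) (n : ℕ) :
    |(∫ x in (0:ℝ)..1, φ ((TT β)^[n] x)) - ∫ x in (0:ℝ)..1, φ x| ≤ n * (β - 2) := by
  induction n with
  | zero => simp
  | succ n ih =>
    have := incr hβ (φ := fun x => φ ((TT β)^[n] x)) (hφ.comp (it_meas β _)) (fun x => hB _)
    simp only [← Function.iterate_succ_apply (TT β)] at this
    push_cast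
    rw [abs_le] at *
    constructor <;> linarith

/-- The case `β = 2`. -/
lemma case_two (μ : Measure ℝ) [IsProbabilityMeasure μ]
    (hac : μ ≪ lebI) (hinv : Measure.map (TT 2) μ = μ) : μ = lebI := by
  ext s hs
  set φ : ℝ → ℝ := s.indicator (fun _ => 1) with hφ
  have φm : Measurable φ := measurable_const.indicator hs
  have φB : ∀ x, |φ x| ≤ 1 := by
    intro x; simp only [hφ, indicator]; split_ifs <;> simp
  have l := main_lim le_rfl φm φB μ hac hinv
  have e : ∀ n : ℕ, ∫ x in (0:ℝ)..1, φ ((TT 2)^[3 * n] x) = ∫ x in (0:ℝ)..1, φ x := by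
    intro n
    have := incr_n le_rfl φm φB (3 * n)
    rw [sub_self, mul_zero, abs_nonpos_iff] at this
    linarith
  simp only [e] at l
  have := tendsto_nhds_unique l tendsto_const_nhds
  rw [← lebI_int, hφ, integral_indicator_const _ hs, integral_indicator_const _ hs] at this
  simp only [smul_eq_mul, mul_one] at this
  exact (measureReal_eq_measureReal_iff).1 this

/-- Bounds on the expectation. -/
lemma key_bounds {β : ℝ} (hβ : 2 ≤ β) (μ : Measure ℝ) [IsProbabilityMeasure μ]
    (hac : μ ≪ lebI) (hinv : Measure.map (TT β) μ = μ) :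
    1 / 6 ≤ Emu μ ∧ Emu μ ≤ 1 / 2 ∧
      (β ≤ 3 → ∀ j : ℕ, 1 / 2 - Emu μ ≤ 3 * j * (β - 2) + 2 * (26 / 27) ^ j) := by
  set φ : ℝ → ℝ := fun x => 1 / 2 - Int.fract x with hφ
  have φm : Measurable φ := by simp only [hφ]; fun_prop
  have φB : ∀ x, |φ x| ≤ 1 := by
    intro x
    simp only [hφ]
    rw [abs_le]
    constructor <;> linarith [Int.fract_nonneg x, Int.fract_lt_one x]
  have hE : ∫ x, φ x ∂μ = 1 / 2 - Emu μ := by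
    have i1 : Integrable (fun x : ℝ => Int.fract x) μ :=
      Integrable.of_bound (by fun_prop) 1 (Eventually.of_forall fun x => by
        rw [Real.norm_eq_abs, abs_of_nonneg (Int.fract_nonneg x)]; exact (Int.fract_lt_one x).le)
    simp only [hφ]
    rw [integral_sub (integrable_const _) i1]
    simp only [integral_const, probReal_univ, smul_eq_mul, one_mul]
    congr 1
    unfold Emu
    rw [← integral_indicator measurableSet_Icc]
    apply integral_congr_ae
    apply hac.ae_le
    have h1 : ∀ᵐ x ∂lebI, x ∈ Icc (0:ℝ) 1 := ae_restrict_mem measurableSet_Icc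
    have h2 : ∀ᵐ x ∂lebI, x ≠ 1 := ae_restrict_of_ae (Measure.ae_ne volume 1)
    filter_upwards [h1, h2] with x hx hx1
    rw [indicator_of_mem hx]
    exact Int.fract_eq_self.2 ⟨hx.1, lt_of_le_of_ne hx.2 hx1⟩
  have lim := main_lim hβ φm φB μ hac hinv
  rw [hE] at lim
  have b : ∀ n : ℕ, 0 ≤ ∫ x in (0:ℝ)..1, φ ((TT β)^[3 * n] x) ∧
      ∫ x in (0:ℝ)..1, φ ((TT β)^[3 * n] x) ≤ 1 / 3 := by
    intro n
    obtain ⟨f, hf, h⟩ := iter_mem hβ (3 * n)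
    rw [h φ φm φB]
    have e : ∫ x in (0:ℝ)..1, φ x * f x = ∫ x in (0:ℝ)..1, (1 / 2 - x) * f x := by
      apply intervalIntegral.integral_congr_Ioo_of_le zero_le_one
      intro x hx
      simp [hφ, Int.fract_eq_self.2 ⟨hx.1.le, hx.2⟩]
    have ii : IntervalIntegrable (fun x => (1 / 2 - x) * f x) volume 0 1 :=
      (hf.int le_rfl zero_le_one).continuousOn_mul (by fun_prop)
    rw [e]
    constructor
    · have : ∫ x in (0:ℝ)..1, (1 / 2 - x) * f (1 / 2) = 0 := by
        rw [intervalIntegral.integral_mul_const, intervalIntegral.integral_sub (by simp) (by simp)]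
        norm_num
      refine this.symm.le.trans ?_
      apply intervalIntegral.integral_mono_on zero_le_one
        (Continuous.intervalIntegrable (by fun_prop) _ _) ii
      intro x hx
      rcases le_total x (1 / 2) with h1 | h1
      · have := hf.anti (by exact hx.1) (by simp : (1 / 2 : ℝ) ∈ Ici 0) h1
        exact mul_le_mul_of_nonneg_left this (by linarith)
      · have := hf.anti (by simp : (1 / 2 : ℝ) ∈ Ici 0) (by exact hx.1) h1
        exact mul_le_mul_of_nonpos_left this (by linarith)
    · have : ∫ x in (0:ℝ)..1, (1 - x) ^ 2 = 1 / 3 := by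
        have := intervalIntegral.integral_comp_sub_left (a := 0) (b := 1) (fun x : ℝ => x ^ 2) 1
        rw [this]; norm_num
      rw [← this]
      apply intervalIntegral.integral_mono_on zero_le_one ii
        (Continuous.intervalIntegrable (by fun_prop) _ _)
      intro x hx
      have h1 := hf.le hx.1
      have h0 := hf.nonneg x hx.1
      nlinarith [sq_nonneg x, mul_nonneg (sq_nonneg x) h0, mul_nonneg (sq_nonneg (1 - x)) (by linarith : 0 ≤ 2 - f x)]
  refine ⟨?_, ?_, ?_⟩
  · have := le_of_tendsto' lim (fun n => (b n).2)
    linarith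
  · have := ge_of_tendsto' lim (fun n => (b n).1)
    linarith
  · intro hβ3 j
    have lim2 := lim.comp (tendsto_add_atTop_nat j)
    apply le_of_tendsto' lim2
    intro n
    simp only [Function.comp]
    obtain ⟨f, hf, h⟩ := iter_mem hβ (3 * n)
    have e1 : ∫ x in (0:ℝ)..1, φ ((TT β)^[3 * (n + j)] x) =
        ∫ x in (0:ℝ)..1, φ ((TT β)^[3 * j] x) * f x := by
      rw [← h (fun x => φ ((TT β)^[3 * j] x)) (φm.comp (it_meas β _)) (fun x => φB _)]
      simp only [← Function.iterate_add_apply]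
      rw [show 3 * j + 3 * n = 3 * (n + j) by ring]
    have e2 : ∫ x in (0:ℝ)..1, φ ((TT β)^[3 * j] x) =
        ∫ x in (0:ℝ)..1, φ ((TT β)^[3 * j] x) * (if x < 1 then 1 else 0) := by
      apply intervalIntegral.integral_congr_Ioo_of_le zero_le_one
      intro x hx
      simp [hx.2]
    have c1 := contr hβ rfl φm φB j 1 _ _ (hf.mono (by norm_num))
      ((ind_mem zero_le_one).mono (by norm_num))
    rw [← e1, ← e2] at c1
    have i := incr_n hβ φm φB (3 * j)
    have z : ∫ x in (0:ℝ)..1, φ x = 0 := by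
      have : ∫ x in (0:ℝ)..1, φ x = ∫ x in (0:ℝ)..1, (1 / 2 - x) := by
        apply intervalIntegral.integral_congr_Ioo_of_le zero_le_one
        intro x hx
        simp [hφ, Int.fract_eq_self.2 ⟨hx.1.le, hx.2⟩]
      rw [this, intervalIntegral.integral_sub (by simp) (by simp)]
      norm_num
    have p : (1 - 1 / (3 * β ^ 2)) ^ j ≤ (26 / 27 : ℝ) ^ j := by
      apply pow_le_pow_left₀
      · have : 1 / (3 * β ^ 2) ≤ 1 / 12 := by
          apply one_div_le_one_div_of_le (by norm_num); nlinarith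
        linarith
      · have : 1 / 27 ≤ 1 / (3 * β ^ 2) := by
          apply one_div_le_one_div_of_le (by positivity); nlinarith
        linarith
    have c2 := (abs_le.1 c1).2
    have i2 := (abs_le.1 i).2
    push_cast at i2
    linarith

/-- Main quantitative estimate. -/
lemma quant {δ : ℝ} (h0 : 0 < δ) (h1 : δ ≤ Real.exp (-1)) (μ : Measure ℝ) [IsProbabilityMeasure μ]
    (hac : μ ≪ lebI) (hinv : Measure.map (TT (2 + δ)) μ = μ) :
    1 / Emu μ - 2 ≤ 1200 * (δ * Real.log (1 / δ)) := by
  set L := Real.log (1 / δ) with hL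
  have hlog : Real.log δ ≤ -1 := by
    have := Real.log_le_log h0 h1
    rwa [Real.log_exp] at this
  have hL' : L = - Real.log δ := by rw [hL, one_div, Real.log_inv]
  have hL1 : 1 ≤ L := by linarith
  have hδ1 : δ ≤ 1 := h1.trans (by rw [Real.exp_le_one_iff]; norm_num)
  obtain ⟨a, b, c⟩ := key_bounds (by linarith) μ hac hinv
  have c := c (by linarith) ⌈27 * L⌉₊
  have j1 : 27 * L ≤ ⌈27 * L⌉₊ := Nat.le_ceil _
  have j2 : (⌈27 * L⌉₊ : ℝ) < 27 * L + 1 := Nat.ceil_lt_add_one (by linarith)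
  set j := ⌈27 * L⌉₊
  have p : (26 / 27 : ℝ) ^ j ≤ δ := by
    calc (26 / 27 : ℝ) ^ j ≤ (Real.exp (-(1 / 27))) ^ j := by
          apply pow_le_pow_left₀ (by norm_num)
          have := Real.add_one_le_exp (-(1 / 27) : ℝ)
          linarith
      _ = Real.exp (-(j / 27)) := by rw [← Real.exp_nat_mul]; congr 1; ring
      _ ≤ Real.exp (Real.log δ) := by
          apply Real.exp_le_exp.2; linarith
      _ = δ := Real.exp_log h0
  have d : 1 / 2 - Emu μ ≤ 86 * (δ * L) := by
    have : 2 + δ - 2 = δ := by ring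
    rw [this] at c
    nlinarith [mul_nonneg h0.le (by linarith : 0 ≤ L - 1), mul_nonneg h0.le (by linarith : 0 ≤ 27 * L + 1 - j)]
  have hEp : 0 < Emu μ := by linarith
  rw [div_sub' hEp.ne', div_le_iff₀ hEp]
  have : 0 ≤ δ * L := by positivity
  nlinarith

/-- For weak self-consistency, Lebesgue is the unique acim. -/
theorem stmt1 (F : ℝ → ℝ) (hF : ContDiff ℝ 1 F) (hF0 : F 0 = 0)
    (hFpos : ∀ x : ℝ, x ≠ 0 → 0 < F x)
    (hF' : ∃ C > 0, ∃ x₀ ∈ Set.Ioo (0:ℝ) 1, ∀ x : ℝ, 0 < x → x < x₀ →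
      |deriv F x| ≤ C / |Real.log x|) :
    ∃ ε₁ > (0:ℝ), ∀ ε : ℝ, 0 ≤ ε → ε < ε₁ →
      ∀ μ : Measure ℝ, IsProbabilityMeasure μ → μ ≪ lebI →
        Measure.map (Tsc ε F μ) μ = μ → μ = lebI := by
  obtain ⟨C, hC, x₀, ⟨hx0, hx1⟩, hd⟩ := hF'
  have near : ∀ t, 0 < t → t < x₀ → F t ≤ C / (- Real.log t) * t := by
    intro t h0 h1
    obtain ⟨ξ, ⟨k1, k2⟩, k3⟩ := exists_deriv_eq_slope F h0 hF.continuous.continuousOn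
      (hF.differentiable (by norm_num)).differentiableOn
    rw [hF0, sub_zero, sub_zero, eq_div_iff h0.ne'] at k3
    rw [← k3]
    have l1 : Real.log t < 0 := Real.log_neg h0 (by linarith)
    have l2 : Real.log ξ < Real.log t := Real.log_lt_log k1 k2
    have := hd ξ k1 (by linarith)
    rw [abs_of_neg (by linarith : Real.log ξ < 0)] at this
    gcongr
    calc deriv F ξ ≤ _ := le_abs_self _
      _ ≤ _ := this
      _ ≤ C / (-Real.log t) := by
        apply div_le_div_of_nonneg_left hC.le (by linarith) (by linarith)
  obtain ⟨M, hM⟩ := (isCompact_Icc (a := (0:ℝ)) (b := 4)).exists_bound_of_continuousOn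
    hF.continuous.continuousOn
  have hM0 : 0 ≤ M := (norm_nonneg _).trans (hM 0 (by simp))
  set K : ℝ := 1200 with hK
  set η : ℝ := min (Real.exp (-1)) (min ((1 / (4 * K)) ^ 4) ((x₀ / 2) ^ 4)) with hη
  have hη0 : 0 < η := by
    simp only [hη, lt_min_iff]
    refine ⟨Real.exp_pos _, by positivity, by positivity⟩
  refine ⟨min (η / (M + 1)) (1 / (8 * K * C)), lt_min (by positivity) (by positivity), ?_⟩
  intro ε hε hε1 μ _ hac hinv
  obtain ⟨hεa, hεb⟩ := lt_min_iff.1 hε1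
  set t := 1 / Emu μ - 2 with ht
  set δ := ε * F t with hδ
  have hT : Tsc ε F μ = TT (2 + δ) := by
    ext x; simp only [Tsc, TT, hδ, ht]
  rw [hT] at hinv
  have hFn : ∀ x, 0 ≤ F x := by
    intro x
    by_cases hx : x = 0
    · rw [hx, hF0]
    · exact (hFpos x hx).le
  have hδ0 : 0 ≤ δ := mul_nonneg hε (hFn t)
  rcases hδ0.eq_or_lt with hz | hpos
  · rw [← hz, add_zero] at hinv
    exact case_two μ hac hinv
  exfalso
  obtain ⟨a, b, _⟩ := key_bounds (by linarith) μ hac hinv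
  have hEp : 0 < Emu μ := by linarith
  have t0 : 0 ≤ t := by
    rw [ht, sub_nonneg, le_div_iff₀ hEp]; linarith
  have t4 : t ≤ 4 := by
    rw [ht, sub_le_iff_le_add, div_le_iff₀ hEp]; linarith
  have tpos : 0 < t := by
    apply lt_of_le_of_ne t0
    intro h
    rw [hδ, ← h, hF0, mul_zero] at hpos
    exact lt_irrefl _ hpos
  have hδη : δ ≤ η := by
    have h1 : F t ≤ M := (le_abs_self _).trans (hM t ⟨t0, t4⟩)
    rw [lt_div_iff₀ (by linarith)] at hεa
    nlinarith
  have d1 : δ ≤ Real.exp (-1) := hδη.trans (min_le_left _ _)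
  have d2 : δ ≤ (1 / (4 * K)) ^ 4 := hδη.trans ((min_le_right _ _).trans (min_le_left _ _))
  have d3 : δ ≤ (x₀ / 2) ^ 4 := hδη.trans ((min_le_right _ _).trans (min_le_right _ _))
  have q := quant hpos d1 μ hac hinv
  rw [← ht, ← hK] at q
  set L := Real.log (1 / δ) with hL
  have hL' : L = - Real.log δ := by rw [hL, one_div, Real.log_inv]
  have hlog : Real.log δ ≤ -1 := by
    have := Real.log_le_log hpos d1
    rwa [Real.log_exp] at this
  obtain ⟨s, hs, hs4⟩ : ∃ s : ℝ, 0 < s ∧ s ^ 4 = δ := by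
    refine ⟨δ ^ (1 / 4 : ℝ), by positivity, ?_⟩
    rw [← Real.rpow_natCast, ← Real.rpow_mul hpos.le]; norm_num
  have s2 : s ≤ 1 / (4 * K) := by
    rw [← hs4] at d2
    exact le_of_pow_le_pow_left₀ (by norm_num) (by positivity) d2
  have s3 : s ≤ x₀ / 2 := by
    rw [← hs4] at d3
    exact le_of_pow_le_pow_left₀ (by norm_num) (by positivity) d3
  have Ls : L = 4 * (- Real.log s) := by
    rw [hL', ← hs4, Real.log_pow]; push_cast; ring
  have Ls2 : - Real.log s ≤ 1 / s := by
    have := Real.log_le_sub_one_of_pos (x := 1 / s) (by positivity)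
    rw [one_div, Real.log_inv] at this
    rw [one_div]; linarith
  have hts : t ≤ s := by
    have h1 : δ * L ≤ 4 * s ^ 3 := by
      rw [Ls, ← hs4]
      calc s ^ 4 * (4 * (- Real.log s)) ≤ s ^ 4 * (4 * (1 / s)) := by gcongr
        _ = 4 * s ^ 3 := by field_simp
    have h2 : 4 * K * s ≤ 1 := by
      rw [le_div_iff₀ (by positivity)] at s2; linarith
    have hs1 : s ≤ 1 := by linarith
    have hK0 : 0 < K := by norm_num [hK]
    calc t ≤ K * (δ * L) := q
      _ ≤ K * (4 * s ^ 3) := by gcongr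
      _ = (4 * K * s) * (s * s) := by ring
      _ ≤ 1 * (s * 1) := by gcongr
      _ = s := by ring
  have lt : Real.log t ≤ Real.log s := Real.log_le_log tpos hts
  have n := near t tpos (by linarith)
  have lpos : 0 < - Real.log t := by
    have : Real.log s < 0 := by linarith
    linarith
  have f1 : δ * L ≤ 4 * ε * C * t := by
    have : δ ≤ ε * (C / (- Real.log t) * t) := mul_le_mul_of_nonneg_left n hε
    calc δ * L ≤ (ε * (C / (- Real.log t) * t)) * (4 * (- Real.log t)) := by
          have : L ≤ 4 * (- Real.log t) := by linarith
          have : 0 ≤ L := by linarith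
          gcongr
      _ = 4 * ε * C * t := by
          have := lpos.ne'
          generalize - Real.log t = l at this ⊢
          field_simp
  have hK0 : 0 < K := by norm_num [hK]
  rw [lt_div_iff₀ (by positivity)] at hεb
  have : t ≤ (ε * (8 * K * C)) * t / 2 := by
    calc t ≤ K * (δ * L) := q
      _ ≤ K * (4 * ε * C * t) := by gcongr
      _ = _ := by ring
  nlinarith
end
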